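/- In a finite partial Sherk plane in which some line is incident only with thick points, two lines are parallel (do not intersect) if and only if they have a common perpendicular. -/

import Mathlib

/-!
Every line `l` has as many perpendiculars as points.  If `x` and `y` are not perpendicular, sending
a point of `y` to a perpendicular of `x` through it is injective, so by finiteness and symmetry it
is a bijection: `x` and `y` have equally many points, every perpendicular of `x` meets `y`, and no
point of `y` carries two perpendiculars of `x` (`perps_meet_of_not_perp`).  The second of these
facts shows that disjoint lines have the same perpendiculars, which gives the forward implication.
The third says that a point carrying two perpendiculars of `x` carries only perpendiculars of `x`.

For the converse it has to be shown that no line has a pole. Perpendicularity puts the lines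
through two points `P`, `Q` of a line `l` in bijection, unless the perpendiculars of `l` at `P`
and `Q` are perpendicular to each other; a third line through a thick point bypasses the
exception. So the all-thick line makes every point thick, every line of the same size `n` and
every point of the same degree `k + 1`, where `k ≥ 2` (`uniform_all`, `deg_eq`). Let `N` be the
number of lines. Counting perpendicular pairs shows that the number `p` of lines with pole `P` is
independent of `P`, and `N + k * p = (k + 1) * n`; counting the lines meeting a given one shows
that each class of lines with the same perpendiculars has `s = n - k * p` elements. If two lines
of different classes meet at `P`, their common perpendiculars are exactly the `p` lines with pole
`P`.

Hence, if `p > 0`, the graph of perpendicularity on the classes is regular of degree `n' = n / s`,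
any two distinct vertices have `p' = p / s` common neighbours, and `n' = 1 + k * p'`. A graph of
this kind without loops does not exist (`no_polarity`): modulo a prime `q` dividing `n' - p'`, the
adjacency matrix `A` satisfies `A ^ 2 = p' J` and `A J = p' J` with `J` the all-ones matrix, so `0
= (tr A) ^ q = tr (A ^ q) = p' ^ q`, although `q` cannot divide both `p'` and `n' = 1 + k * p'`.
This is the argument by which a polarity of a finite projective plane has an absolute point.
-/

structure PartialSherkPlane (Point Line : Type*) where
  Inc : Point → Line → Prop
  Perp : Line → Line → Prop
  aStar : ∀ P Q : Point, P ≠ Q → ∀ l m : Line,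
    Inc P l → Inc Q l → Inc P m → Inc Q m → l = m
  b1 : ∀ l m : Line, Perp l m → Perp m l
  b2 : ∀ l m : Line, Perp l m → ∃ P : Point, Inc P l ∧ Inc P m
  b3 : ∀ (P : Point) (l : Line), ∃ m : Line, Inc P m ∧ Perp m l
  b4 : ∀ (P : Point) (l : Line), Inc P l → ∃! m : Line, Inc P m ∧ Perp m l
  b5 : ∃ x y z : Line, Perp x y ∧ ¬ Perp x z ∧ ¬ Perp y z ∧
    ¬ ∃ P : Point, Inc P x ∧ Inc P y ∧ Inc P z

/-- `P` is a pole of `l`: `P` is not on `l` and at least two distinct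
perpendiculars to `l` pass through `P`. -/
def PartialSherkPlane.IsPole {Point Line : Type*} (G : PartialSherkPlane Point Line)
    (P : Point) (l : Line) : Prop :=
  ¬ G.Inc P l ∧ ∃ g h : Line, g ≠ h ∧ G.Inc P g ∧ G.Inc P h ∧ G.Perp g l ∧ G.Perp h l

section

open Classical Finset

/-- A finite loopless graph, regular of degree `n = 1 + k * p` with `k ≥ 2` and `p ≥ 1`, in which
any two distinct vertices have exactly `p` common neighbours, cannot exist. -/
theorem no_polarity {V : Type*} [Fintype V] (adj : V → V → Prop)
    (symm : ∀ a b, adj a b → adj b a) (irr : ∀ a, ¬ adj a a) (n p k : ℕ) (hk : 2 ≤ k) (hp : 1 ≤ p)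
    (hn : n = 1 + k * p) (hN : Fintype.card V + k * p = (k + 1) * n)
    (hdeg : ∀ a, #{b | adj a b} = n)
    (hcom : ∀ a b, a ≠ b → #{c | adj a c ∧ adj c b} = p) : False := by
  have hnp : p + 1 < n := by nlinarith
  obtain ⟨q, hq, hqd⟩ := Nat.exists_prime_and_dvd (n := n - p) (by omega)
  have : Fact q.Prime := ⟨hq⟩
  have e1 : (n : ZMod q) = p := by
    have : ((n - p : ℕ) : ZMod q) = 0 := (ZMod.natCast_eq_zero_iff _ _).2 hqd
    rw [Nat.cast_sub (by omega)] at this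
    exact sub_eq_zero.1 this
  have e2 : (Fintype.card V : ZMod q) = p := by
    have := congrArg (Nat.cast : ℕ → ZMod q) hN
    push_cast at this
    rw [e1] at this
    linear_combination this
  let A : Matrix V V (ZMod q) := Matrix.of fun a b => if adj a b then 1 else 0
  let J : Matrix V V (ZMod q) := Matrix.of fun _ _ => 1
  have hAA : A ^ 2 = (p : ZMod q) • J := by
    ext a b
    have h1 : (A ^ 2) a b = ((#{c | adj a c ∧ adj c b} : ℕ) : ZMod q) := by
      rw [pow_two, Matrix.mul_apply, Finset.card_filter]
      push_cast
      refine Finset.sum_congr rfl fun c _ => ?_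
      simp only [A, Matrix.of_apply, ite_and]
      split_ifs <;> simp
    rw [h1]
    simp only [J, Matrix.smul_apply, Matrix.of_apply, smul_eq_mul, mul_one]
    by_cases hab : a = b
    · subst hab
      rw [← e1, ← hdeg a]
      congr 2
      ext c
      simpa using fun h => symm _ _ h
    · rw [hcom a b hab]
  have hJA : J * A = (p : ZMod q) • J := by
    ext a b
    rw [Matrix.mul_apply]
    simp only [J, A, Matrix.smul_apply, Matrix.of_apply, smul_eq_mul, mul_one, one_mul]
    rw [← e1, ← hdeg b, Finset.card_filter]
    push_cast
    refine Finset.sum_congr rfl fun c _ => ?_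
    simp only [show adj c b ↔ adj b c from ⟨symm _ _, symm _ _⟩]
  have hpow : ∀ j, A ^ (j + 2) = ((p : ZMod q) ^ (j + 1)) • J := by
    intro j
    induction j with
    | zero => simpa using hAA
    | succ j ih =>
      rw [show j + 1 + 2 = (j + 2) + 1 by ring, pow_succ, ih, Matrix.smul_mul, hJA, smul_smul,
        ← pow_succ]
  have htr : A.trace = 0 := by
    simp [Matrix.trace, A, irr]
  have hJ : J.trace = p := by
    simp [Matrix.trace, J, ← e2]
  have h := ZMod.trace_pow_card A
  obtain ⟨j, rfl⟩ : ∃ j, q = j + 2 := ⟨q - 2, by have := hq.two_le; omega⟩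
  rw [hpow, htr, Matrix.trace_smul, hJ, smul_eq_mul, ← pow_succ, zero_pow (by omega)] at h
  have hp0 : (p : ZMod (j + 2)) = 0 := by simpa using h
  have := congrArg (Nat.cast : ℕ → ZMod (j + 2)) hn
  push_cast at this
  rw [e1, hp0] at this
  simp at this

namespace PartialSherkPlane

variable {Point Line : Type*} (G : PartialSherkPlane Point Line)

theorem nonempty_point (G : PartialSherkPlane Point Line) : Nonempty Point := by
  obtain ⟨x, y, z, h, -⟩ := G.b5
  obtain ⟨P, -⟩ := G.b2 _ _ h
  exact ⟨P⟩

theorem exists_inc (l : Line) : ∃ P, G.Inc P l := by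
  obtain ⟨P⟩ := G.nonempty_point
  obtain ⟨m, -, hm⟩ := G.b3 P l
  obtain ⟨Q, -, hQ⟩ := G.b2 _ _ hm
  exact ⟨Q, hQ⟩

theorem exists_line (P : Point) : ∃ l, G.Inc P l := by
  obtain ⟨x, -⟩ := G.b5
  obtain ⟨m, hm, -⟩ := G.b3 P x
  exact ⟨m, hm⟩

variable {G}

theorem perp_unique {P : Point} {l m m' : Line} (hl : G.Inc P l) (hm : G.Inc P m)
    (hm' : G.Inc P m') (h : G.Perp m l) (h' : G.Perp m' l) : m = m' :=
  (G.b4 P l hl).unique ⟨hm, h⟩ ⟨hm', h'⟩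

/-- If `l` were perpendicular to itself, it would be its only perpendicular, hence contain all
points; the other lines would then be single points, and there would be no room for `b5`. -/
theorem irrefl (l : Line) : ¬ G.Perp l l := by
  intro hl
  have ha : ∀ m, G.Perp m l → m = l := by
    intro m hm
    obtain ⟨P, h1, h2⟩ := G.b2 _ _ hm
    exact perp_unique h2 h1 h2 hm hl
  have hb : ∀ P, G.Inc P l := by
    intro P
    obtain ⟨m, h1, h2⟩ := G.b3 P l
    exact ha m h2 ▸ h1
  obtain ⟨x, y, z, hxy, hxz, hyz, hc⟩ := G.b5
  have hw : ∀ w, w = l := by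
    intro w
    by_contra hwl
    obtain ⟨X, hX⟩ := G.exists_inc w
    have hall : ∀ P, P = X := by
      intro P
      by_contra hP
      obtain ⟨m, h1, h2⟩ := G.b3 P w
      obtain ⟨R, h3, h4⟩ := G.b2 _ _ h2
      have hR : R = X := by
        by_contra hR
        exact hwl (G.aStar R X hR _ _ h4 hX (hb R) (hb X))
      subst hR
      have := G.aStar P R hP _ _ h1 h3 (hb P) (hb R)
      subst this
      exact hwl (ha w (G.b1 _ _ h2))
    refine hc ⟨X, ?_, ?_, ?_⟩
    · obtain ⟨R, h⟩ := G.exists_inc x; exact hall R ▸ h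
    · obtain ⟨R, h⟩ := G.exists_inc y; exact hall R ▸ h
    · obtain ⟨R, h⟩ := G.exists_inc z; exact hall R ▸ h
  rw [hw x, hw z] at hxz
  exact hxz hl

/-- Distinct lines share at most one point, stated for points. -/
theorem point_unique {P Q : Point} {l m : Line} (hlm : l ≠ m) (h1 : G.Inc P l) (h2 : G.Inc P m)
    (h3 : G.Inc Q l) (h4 : G.Inc Q m) : P = Q := by
  by_contra h
  exact hlm (G.aStar P Q h l m h1 h3 h2 h4)

theorem ne_of_perp {l m : Line} (h : G.Perp l m) : l ≠ m := by
  rintro rfl; exact irrefl l h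

/-! ### Classes of lines with the same perpendiculars -/

variable (G) in
/-- Two lines are equivalent if they have the same perpendiculars. -/
def twin : Setoid Line where
  r x y := ∀ w, G.Perp w x ↔ G.Perp w y
  iseqv := ⟨fun _ _ => Iff.rfl, fun h w => (h w).symm, fun h h' w => (h w).trans (h' w)⟩

theorem twin_eq {P : Point} {x y : Line} (h : G.twin x y) (hx : G.Inc P x) (hy : G.Inc P y) :
    x = y := by
  obtain ⟨w, hPw, hwx⟩ := G.b3 P x
  exact perp_unique hPw hx hy (G.b1 _ _ hwx) (G.b1 _ _ ((h w).1 hwx))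

variable (G) in
/-- Perpendicularity of twin classes. -/
def qperp : Quotient G.twin → Quotient G.twin → Prop :=
  Quotient.lift₂ G.Perp fun a _ _ b' ha hb => propext <|
    (hb a).trans ⟨fun h => G.b1 _ _ ((ha b').1 (G.b1 _ _ h)),
      fun h => G.b1 _ _ ((ha b').2 (G.b1 _ _ h))⟩

/-- If all classes of twins have `s` elements, a property of classes holds for `s` times as many
lines as classes. -/
theorem card_lift [Fintype Line] {s : ℕ} (hs : ∀ x, #{y | G.twin y x} = s)
    (f : Quotient G.twin → Prop) [DecidablePred f] :
    #{y : Line | f (Quotient.mk _ y)} = s * #{c | f c} := by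
  rw [Finset.card_eq_sum_card_fiberwise (f := fun y => Quotient.mk G.twin y)
    (t := ({c | f c} : Finset (Quotient G.twin))) (fun y hy => by simpa using hy),
    Finset.sum_congr rfl (g := fun _ => s), Finset.sum_const, smul_eq_mul, mul_comm]
  intro c hc
  induction c using Quotient.inductionOn with
  | h x =>
    rw [← hs x]
    congr 1
    ext y
    simp only [Finset.mem_filter, Finset.mem_univ, true_and] at hc ⊢
    rw [Quotient.eq]
    exact ⟨fun h => h.2, fun h => ⟨by rwa [Quotient.sound h], h⟩⟩

/-! ### Non-perpendicular lines -/

variable (G) in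
/-- The points on a line. -/
noncomputable def pts [Fintype Point] (l : Line) : Finset Point := {P | G.Inc P l}

variable (G) in
/-- The lines through a point. -/
noncomputable def pencil [Fintype Line] (P : Point) : Finset Line := {l | G.Inc P l}

variable (G) in
/-- The perpendiculars of a line. -/
noncomputable def perps [Fintype Line] (l : Line) : Finset Line := {m | G.Perp m l}

variable (G) in
/-- The lines perpendicular to every line through `P`. As every point lies on two lines, these are
the lines having `P` as a pole once `perp_of_two` is known. -/
noncomputable def polars [Fintype Line] (P : Point) : Finset Line :=
  {l | ∀ m, G.Inc P m → G.Perp l m}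

@[simp] theorem mem_pts [Fintype Point] {P : Point} {l : Line} : P ∈ G.pts l ↔ G.Inc P l := by
  simp [pts]

@[simp] theorem mem_pencil [Fintype Line] {P : Point} {l : Line} : l ∈ G.pencil P ↔ G.Inc P l := by
  simp [pencil]

@[simp] theorem mem_perps [Fintype Line] {m l : Line} : m ∈ G.perps l ↔ G.Perp m l := by
  simp [perps]

@[simp] theorem mem_polars [Fintype Line] {P : Point} {l : Line} :
    l ∈ G.polars P ↔ ∀ m, G.Inc P m → G.Perp l m := by simp [polars]

theorem exists_third [Fintype Line] {P : Point} (hP : 3 ≤ #(G.pencil P)) (x y : Line) :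
    ∃ z, G.Inc P z ∧ z ≠ x ∧ z ≠ y := by
  by_contra! h
  have hs : G.pencil P ⊆ {x, y} := by
    intro z hz
    by_cases hzx : z = x
    · simp [hzx]
    · simp [h z (by simpa using hz) hzx]
  have := (Finset.card_le_card hs).trans Finset.card_le_two
  omega

variable [Fintype Point] [Fintype Line]

theorem card_perps (l : Line) : #(G.perps l) = #(G.pts l) := by
  have h : ∀ P ∈ G.pts l, ∃ m, G.Inc P m ∧ G.Perp m l := fun P _ => G.b3 P l
  choose f hf using h
  symm
  refine Finset.card_bij f (fun P hP => by simpa using (hf P hP).2) ?_ ?_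
  · intro P hP Q hQ hPQ
    refine point_unique (ne_of_perp (hf P hP).2) (hf P hP).1 (by simpa using hP) ?_
      (by simpa using hQ)
    rw [hPQ]
    exact (hf Q hQ).1
  · intro m hm
    rw [mem_perps] at hm
    obtain ⟨P, h1, h2⟩ := G.b2 _ _ hm
    have hP : P ∈ G.pts l := by simpa using h2
    exact ⟨P, hP, perp_unique h2 (hf P hP).1 h1 (hf P hP).2 hm⟩

theorem card_pts_le {x y : Line} (hxy : ¬ G.Perp y x) : #(G.pts y) ≤ #(G.pts x) := by
  rw [← card_perps x]
  choose f hf using fun P => G.b3 P x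
  refine Finset.card_le_card_of_injOn f (fun P _ => by simpa using (hf P).2) ?_
  intro P hP Q hQ hPQ
  refine point_unique (l := y) (m := f P) ?_ (by simpa using hP) (hf P).1 (by simpa using hQ)
    (hPQ ▸ (hf Q).1)
  rintro h
  exact hxy (h ▸ (hf P).2)

theorem card_pts_eq_of_not_perp {x y : Line} (hxy : ¬ G.Perp y x) : #(G.pts y) = #(G.pts x) :=
  le_antisymm (card_pts_le hxy) (card_pts_le fun h => hxy (G.b1 _ _ h))

/-- If `x` and `y` are not perpendicular, the points of `y` correspond bijectively to the
perpendiculars of `x` by incidence. -/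
theorem perps_meet_of_not_perp {x y : Line} (hxy : ¬ G.Perp y x) :
    (∀ w, G.Perp w x → ∃ R, G.Inc R w ∧ G.Inc R y) ∧
    (∀ R w w', G.Inc R y → G.Inc R w → G.Inc R w' → G.Perp w x → G.Perp w' x → w = w') := by
  choose f hf using fun P => G.b3 P x
  have inj : Set.InjOn f (G.pts y) := by
    intro P hP Q hQ hPQ
    refine point_unique (l := y) (m := f P) ?_ (by simpa using hP) (hf P).1 (by simpa using hQ)
      (hPQ ▸ (hf Q).1)
    rintro h
    exact hxy (h ▸ (hf P).2)
  have surj : Set.SurjOn f (G.pts y) (G.perps x) :=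
    Finset.surjOn_of_injOn_of_card_le f (fun P _ => by simpa using (hf P).2) inj
      (by rw [card_perps, card_pts_eq_of_not_perp hxy])
  have key : ∀ R w, G.Inc R y → G.Inc R w → G.Perp w x → w = f R := by
    intro R w hR hw hwx
    obtain ⟨S, hS, rfl⟩ := surj (show w ∈ (G.perps x : Set Line) by simpa using hwx)
    congr 1
    refine point_unique (l := y) (m := f S) ?_ (by simpa using hS) (hf S).1 hR hw
    rintro h
    exact hxy (h ▸ hwx)
  refine ⟨fun w hw => ?_, fun R w w' hR hw hw' h h' => (key R w hR hw h).trans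
    (key R w' hR hw' h').symm⟩
  obtain ⟨S, hS, rfl⟩ := surj (show w ∈ (G.perps x : Set Line) by simpa using hw)
  exact ⟨S, (hf S).1, by simpa using hS⟩

/-- A point `R` on two perpendiculars of `x` is on perpendiculars of `x` only. -/
theorem perp_of_two {R : Point} {x w w' y : Line} (hne : w ≠ w') (hw : G.Inc R w)
    (hw' : G.Inc R w') (h : G.Perp w x) (h' : G.Perp w' x) (hy : G.Inc R y) : G.Perp y x := by
  by_contra hyx
  exact hne ((perps_meet_of_not_perp hyx).2 R w w' hy hw hw' h h')

/-- Disjoint lines have the same perpendiculars. -/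
theorem perp_of_disjoint {l m g : Line} (h : ¬ ∃ P, G.Inc P l ∧ G.Inc P m) (hg : G.Perp g l) :
    G.Perp g m := by
  by_contra hgm
  exact h ((perps_meet_of_not_perp (x := g) (y := m) fun h => hgm (G.b1 _ _ h)).1 l (G.b1 _ _ hg))

/-! ### Uniformity -/

/-- If the perpendiculars `u`, `v` of `l` at `P`, `Q` are not perpendicular to each other, then
sending a line through `P` to a perpendicular of it through `Q` is injective. -/
theorem deg_le_of_not_perp {P Q : Point} {l u v : Line} (hP : G.Inc P l) (hQ : G.Inc Q l)
    (hu : G.Inc P u) (hv : G.Inc Q v) (hvl : G.Perp v l)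
    (huv : ¬ G.Perp u v) : #(G.pencil P) ≤ #(G.pencil Q) := by
  choose f hf using fun y => G.b3 Q y
  refine Finset.card_le_card_of_injOn f (fun y _ => by simpa using (hf y).1) ?_
  intro y hy y' hy' hyy
  by_contra hne
  have hall : ∀ z, G.Inc P z → G.Perp z (f y) := fun z hz =>
    perp_of_two hne (by simpa using hy) (by simpa using hy') (G.b1 _ _ (hf y).2)
      (hyy ▸ G.b1 _ _ (hf y').2) hz
  have : v = f y := perp_unique hQ hv (hf y).1 hvl (G.b1 _ _ (hall l hP))
  exact huv (this ▸ hall u hu)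

/-- The symmetric form of `deg_le_of_not_perp`. -/
theorem deg_eq_of_not_perp {P Q : Point} {l u v : Line} (hP : G.Inc P l) (hQ : G.Inc Q l)
    (hu : G.Inc P u) (hv : G.Inc Q v) (hul : G.Perp u l) (hvl : G.Perp v l)
    (huv : ¬ G.Perp u v) : #(G.pencil P) = #(G.pencil Q) :=
  le_antisymm (deg_le_of_not_perp hP hQ hu hv hvl huv)
    (deg_le_of_not_perp hQ hP hv hu hul fun h => huv (G.b1 _ _ h))

variable (G) in
/-- All points of the line are thick. -/
def AllThick (d : Line) : Prop := ∀ P, G.Inc P d → 3 ≤ #(G.pencil P)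

theorem allThick_of_not_perp {d x : Line} (hd : G.AllThick d) (hxd : ¬ G.Perp x d) :
    G.AllThick x := by
  intro R hR
  obtain ⟨g, hRg, hgd⟩ := G.b3 R d
  obtain ⟨S, hSg, hSd⟩ := G.b2 _ _ hgd
  obtain ⟨u, hRu, hug⟩ := G.b3 R g
  -- otherwise `R` would carry two perpendiculars of `d`, forcing `x ⊥ d`
  have hud : ¬ G.Perp u d := fun h => hxd (perp_of_two (ne_of_perp hug) hRu hRg h hgd hR)
  rw [deg_eq_of_not_perp hRg hSg hRu hSd hug (G.b1 _ _ hgd) hud]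
  exact hd S hSd

/-- Any line `x` is reached from an all-thick line `d` by at most two steps along pairs of
non-perpendicular lines. -/
theorem uniform_all {d : Line} (hd : G.AllThick d) (x : Line) :
    G.AllThick x ∧ #(G.pts x) = #(G.pts d) := by
  by_cases hxd : G.Perp x d
  · obtain ⟨P, hPx, hPd⟩ := G.b2 _ _ hxd
    obtain ⟨y, hPy, hyx, hyd⟩ := exists_third (hd P hPd) x d
    have h1 : ¬ G.Perp y d := fun h => hyx (perp_unique hPd hPy hPx h hxd)
    have h2 : ¬ G.Perp x y := fun h => hyd (perp_unique hPx hPy hPd (G.b1 _ _ h) (G.b1 _ _ hxd))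
    exact ⟨allThick_of_not_perp (allThick_of_not_perp hd h1) h2,
      (card_pts_eq_of_not_perp h2).trans (card_pts_eq_of_not_perp h1)⟩
  · exact ⟨allThick_of_not_perp hd hxd, card_pts_eq_of_not_perp hxd⟩

theorem deg_eq_of_collinear (ht : ∀ P, 3 ≤ #(G.pencil P)) {P Q : Point} {x : Line}
    (hP : G.Inc P x) (hQ : G.Inc Q x) : #(G.pencil P) = #(G.pencil Q) := by
  obtain ⟨u, hPu, hux⟩ := G.b3 P x
  obtain ⟨v, hQv, hvx⟩ := G.b3 Q x
  by_cases huv : G.Perp u v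
  · -- a third line through the pole `u ∩ v` of `x` meets `x` in a point with the degree of both
    obtain ⟨R, hRu, hRv⟩ := G.b2 _ _ huv
    obtain ⟨w, hRw, hwu, hwv⟩ := exists_third (ht R) u v
    have hwx : G.Perp w x := perp_of_two (ne_of_perp huv) hRu hRv hux hvx hRw
    obtain ⟨S, hSw, hSx⟩ := G.b2 _ _ hwx
    have h1 : ¬ G.Perp u w := fun h => hwv (perp_unique hRu hRw hRv (G.b1 _ _ h) (G.b1 _ _ huv))
    have h2 : ¬ G.Perp w v := fun h => hwu (perp_unique hRv hRw hRu h huv)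
    exact (deg_eq_of_not_perp hP hSx hPu hSw hux hwx h1).trans
      (deg_eq_of_not_perp hSx hQ hSw hQv hwx hvx h2)
  · exact deg_eq_of_not_perp hP hQ hPu hQv hux hvx huv

theorem deg_eq (ht : ∀ P, 3 ≤ #(G.pencil P)) (P Q : Point) : #(G.pencil P) = #(G.pencil Q) := by
  obtain ⟨y, hy⟩ := G.exists_line P
  obtain ⟨m, hQm, hmy⟩ := G.b3 Q y
  obtain ⟨R, hRm, hRy⟩ := G.b2 _ _ hmy
  exact (deg_eq_of_collinear ht hy hRy).trans (deg_eq_of_collinear ht hRm hQm)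

/-! ### Counting -/

/-- Double count of the pairs `(z, y)` of perpendicular lines with `y` through `P`. -/
theorem count_polars {n k : ℕ} (hn : ∀ l, #(G.pts l) = n) {P : Point} (hk : #(G.pencil P) = k + 1)
    : Fintype.card Line + k * #(G.polars P) = (k + 1) * n := by
  have h := Finset.sum_card_bipartiteAbove_eq_sum_card_bipartiteBelow
    (s := (Finset.univ : Finset Line)) (t := G.pencil P) (r := fun z y => G.Perp z y)
  have h2 : ∑ y ∈ G.pencil P, #(Finset.bipartiteBelow (fun z y => G.Perp z y) univ y)
      = (k + 1) * n := by
    rw [Finset.sum_congr rfl (g := fun _ => n), Finset.sum_const, hk, smul_eq_mul]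
    intro y _
    rw [← hn y, ← card_perps]
    rfl
  have h1 : ∀ z, #(Finset.bipartiteAbove (fun z y => G.Perp z y) (G.pencil P) z)
      = 1 + if z ∈ G.polars P then k else 0 := by
    intro z
    split_ifs with hz
    · rw [add_comm, ← hk]
      congr 1
      exact Finset.filter_true_of_mem fun y hy => mem_polars.1 hz y (by simpa using hy)
    · rw [add_zero, Finset.card_eq_one]
      obtain ⟨m, hPm, hmz⟩ := G.b3 P z
      refine ⟨m, ?_⟩
      ext y
      simp only [Finset.mem_bipartiteAbove, mem_pencil, Finset.mem_singleton]
      refine ⟨fun ⟨hy, hzy⟩ => ?_, fun h => h ▸ ⟨hPm, G.b1 _ _ hmz⟩⟩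
      by_contra hne
      exact hz (mem_polars.2 fun w hw =>
        G.b1 _ _ (perp_of_two hne hy hPm (G.b1 _ _ hzy) hmz hw))
  rw [← h2, ← h, Finset.sum_congr rfl fun z _ => h1 z, Finset.sum_add_distrib, Finset.sum_ite_mem]
  simp [mul_comm]

theorem exists_common {x y : Line} (h : ¬ G.twin x y) : ∃ P, G.Inc P x ∧ G.Inc P y := by
  by_contra h'
  exact h fun w => ⟨perp_of_disjoint h', perp_of_disjoint fun ⟨P, h1, h2⟩ => h' ⟨P, h2, h1⟩⟩

/-- A line that is not a twin of `x` meets `x` in exactly one point; twins of `x` other than `x`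
do not meet it. -/
theorem count_twins {n k : ℕ} (hn : ∀ l, #(G.pts l) = n) (hk : ∀ P, #(G.pencil P) = k + 1)
    (x : Line) : Fintype.card Line = #{y | G.twin y x} + n * k := by
  have h := Finset.sum_card_bipartiteAbove_eq_sum_card_bipartiteBelow
    (s := G.pts x) (t := Finset.univ.erase x) (r := fun P y => G.Inc P y)
  have h1 : ∑ P ∈ G.pts x, #(Finset.bipartiteAbove (fun P y => G.Inc P y) (univ.erase x) P)
      = n * k := by
    rw [Finset.sum_congr rfl (g := fun _ => k), Finset.sum_const, hn, smul_eq_mul]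
    intro P hP
    have : Finset.bipartiteAbove (fun P y => G.Inc P y) (univ.erase x) P
        = (G.pencil P).erase x := by
      ext y; simp [Finset.mem_bipartiteAbove]
    rw [this, Finset.card_erase_of_mem (by simpa using hP), hk]
    simp
  have h2 : ∀ y ∈ Finset.univ.erase x,
      #(Finset.bipartiteBelow (fun P y => G.Inc P y) (G.pts x) y)
      = if ¬ G.twin y x then 1 else 0 := by
    intro y hy
    have hyx : y ≠ x := by simpa using hy
    by_cases hyt : ¬ G.twin y x
    · rw [if_pos hyt]
      obtain ⟨P, hPy, hPx⟩ := exists_common hyt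
      rw [Finset.card_eq_one]
      refine ⟨P, ?_⟩
      ext Q
      simp only [Finset.mem_bipartiteBelow, mem_pts, Finset.mem_singleton]
      exact ⟨fun h => point_unique hyx h.2 h.1 hPy hPx, fun h => h ▸ ⟨hPx, hPy⟩⟩
    · rw [if_neg hyt, Finset.card_eq_zero, Finset.eq_empty_iff_forall_notMem]
      intro Q hQ
      simp only [Finset.mem_bipartiteBelow, mem_pts] at hQ
      exact hyx (twin_eq (not_not.1 hyt) hQ.2 hQ.1)
  rw [h1, Finset.sum_congr rfl h2, ← Finset.card_filter] at h
  have h3 : (Finset.univ.erase x).filter (fun y => ¬ G.twin y x)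
      = Finset.univ.filter (fun y => ¬ G.twin y x) := by
    ext y
    simp only [Finset.mem_filter, Finset.mem_erase, Finset.mem_univ, true_and, and_true,
      and_iff_right_iff_imp]
    rintro hy rfl
    exact hy (G.twin.refl y)
  rw [h, h3, Finset.card_filter_add_card_filter_not, Finset.card_univ]

/-- If every point is thick and all lines have the same size, no line is perpendicular to all lines
through a point: otherwise the classes of twins would form a graph excluded by `no_polarity`. -/
theorem polars_empty (ht : ∀ P, 3 ≤ #(G.pencil P)) {n : ℕ} (hn : ∀ l, #(G.pts l) = n)
    (P₀ : Point) (g : Line) : g ∉ G.polars P₀ := by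
  intro hg
  obtain ⟨k, hk⟩ : ∃ k, #(G.pencil P₀) = k + 1 := ⟨#(G.pencil P₀) - 1, by have := ht P₀; omega⟩
  have hk2 : 2 ≤ k := by have := ht P₀; omega
  have hk' : ∀ P, #(G.pencil P) = k + 1 := fun P => (deg_eq ht P P₀).trans hk
  set p := #(G.polars P₀) with hp
  have hp1 : 1 ≤ p := Finset.card_pos.2 ⟨g, hg⟩
  have hN := count_polars hn hk
  have hp' : ∀ P, #(G.polars P) = p := by
    intro P
    have h := count_polars hn (hk' P)
    exact Nat.eq_of_mul_eq_mul_left (show 0 < k by omega) (Nat.add_left_cancel (h.trans hN.symm))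
  obtain ⟨x₀, hx₀⟩ := G.exists_line P₀
  obtain ⟨y₀, hy₀, hyx₀, -⟩ := exists_third (ht P₀) x₀ x₀
  set s := #{y | G.twin y x₀} with hsdef
  have hs : ∀ x, #{y | G.twin y x} = s := by
    intro x
    have h1 := count_twins hn hk' x
    have h2 := count_twins hn hk' x₀
    omega
  have hs0 : 0 < s := Finset.card_pos.2 ⟨x₀, by simp⟩
  have hdeg : ∀ a, s * #{b | G.qperp a b} = n := by
    intro a
    rw [← card_lift hs]
    induction a using Quotient.inductionOn with
    | h x =>
      rw [← hn x, ← card_perps]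
      congr 1
      ext y
      simp only [Finset.mem_filter, Finset.mem_univ, true_and, mem_perps]
      exact ⟨G.b1 x y, G.b1 y x⟩
  have hcom : ∀ a b, a ≠ b → s * #{c | G.qperp a c ∧ G.qperp c b} = p := by
    intro a b hab
    rw [← card_lift hs (fun c => G.qperp a c ∧ G.qperp c b)]
    induction a using Quotient.inductionOn with
    | h x =>
    induction b using Quotient.inductionOn with
    | h y =>
      obtain ⟨P, hPx, hPy⟩ := exists_common (G := G) (x := x) (y := y)
        fun h => hab (Quotient.sound h)
      have hxy : x ≠ y := fun h => hab (by rw [h])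
      rw [← hp' P]
      congr 1
      ext z
      simp only [Finset.mem_filter, Finset.mem_univ, true_and, mem_polars]
      change G.Perp x z ∧ G.Perp z y ↔ _
      exact ⟨fun h w hw => G.b1 _ _ (perp_of_two hxy hPx hPy h.1 (G.b1 _ _ h.2) hw),
        fun h => ⟨G.b1 _ _ (h x hPx), h y hPy⟩⟩
  have hne : (Quotient.mk G.twin x₀) ≠ Quotient.mk G.twin y₀ := fun h =>
    hyx₀ (twin_eq (Quotient.exact h) hx₀ hy₀).symm
  set n' := #{b | G.qperp (Quotient.mk G.twin x₀) b} with hn'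
  set p' := #{c | G.qperp (Quotient.mk G.twin x₀) c ∧ G.qperp c (Quotient.mk G.twin y₀)} with hp''
  have en : s * n' = n := hdeg _
  have ep : s * p' = p := hcom _ _ hne
  have eN : s * Fintype.card (Quotient G.twin) = Fintype.card Line := by
    simpa using (card_lift hs fun _ => True).symm
  have e1 := count_twins hn hk' x₀
  rw [← hsdef] at e1
  refine no_polarity G.qperp ?_ ?_ n' p' k hk2 ?_ ?_ ?_ ?_ ?_
  · intro a b
    induction a using Quotient.inductionOn
    induction b using Quotient.inductionOn
    exact G.b1 _ _
  · intro a
    induction a using Quotient.inductionOn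
    exact irrefl _
  · exact Nat.pos_of_mul_pos_left (ep ▸ hp1)
  · apply Nat.eq_of_mul_eq_mul_left hs0
    rw [← en, ← hp, ← ep] at hN
    rw [← en] at e1
    nlinarith
  · apply Nat.eq_of_mul_eq_mul_left hs0
    rw [← en, ← hp, ← ep, ← eN] at hN
    linarith
  · exact fun a => Nat.eq_of_mul_eq_mul_left hs0 ((hdeg a).trans en.symm)
  · exact fun a b hab => Nat.eq_of_mul_eq_mul_left hs0 ((hcom a b hab).trans ep.symm)

end PartialSherkPlane

end

open PartialSherkPlane in
theorem stmt_17 {Point Line : Type*} [Fintype Point] [Fintype Line]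
    (G : PartialSherkPlane Point Line)
    (hthick : ∃ l : Line, ∀ P : Point, G.Inc P l → 3 ≤ Nat.card {m : Line // G.Inc P m}) :
    ∀ l m : Line, l ≠ m →
      ((¬ ∃ P : Point, G.Inc P l ∧ G.Inc P m) ↔ ∃ g : Line, G.Perp g l ∧ G.Perp g m) := by
  classical
  obtain ⟨d, hd⟩ := hthick
  have hd' : G.AllThick d := by
    intro P hP
    have h := hd P hP
    rw [Nat.card_eq_fintype_card, Fintype.card_subtype] at h
    convert h using 2
    ext x
    simp
  have ht : ∀ P, 3 ≤ (G.pencil P).card := by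
    intro P
    obtain ⟨x, hx⟩ := G.exists_line P
    exact (uniform_all hd' x).1 P hx
  intro l m hlm
  refine ⟨fun h => ?_, fun ⟨g, hgl, hgm⟩ ⟨P, hPl, hPm⟩ => ?_⟩
  · obtain ⟨P⟩ := G.nonempty_point
    obtain ⟨g, -, hg⟩ := G.b3 P l
    exact ⟨g, hg, perp_of_disjoint h hg⟩
  · refine polars_empty ht (fun x => (uniform_all hd' x).2) P g (mem_polars.2 fun w hw => ?_)
    exact G.b1 _ _ (perp_of_two hlm hPl hPm (G.b1 _ _ hgl) (G.b1 _ _ hgm) hw)
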